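/- Adjoint symmetry of H₆: for all e ∈ ℂ⁹ and u ∈ ℂ, the formal adjoint of H₆(e,u) equals H₆(2−e₁, 2−e₂, 2−e₃, 2−e₄, 2−e₅, 2−e₆, 1−e₇, 1−e₈, 1−e₉, u′), where u′ := 6s² + (4s₁₂ − 18)s − 6s₁₂ − 2s₂₁ + 2s₂₂ − 4s₂₃ + 8 − u (with s, s₁₂, s₂₁, s₂₂, s₂₃ computed from e). -/

import Mathlib

open Polynomial

noncomputable section

abbrev EndP := Module.End ℂ (Polynomial ℂ)

/-- The formal derivative `∂` as a linear endomorphism of `ℂ[x]`. -/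
def D : EndP := Polynomial.derivative

/-- Multiplication by the polynomial `p` as a linear endomorphism of `ℂ[x]`. -/
def M (p : Polynomial ℂ) : EndP := LinearMap.mulLeft ℂ p

/-- The Euler operator `θ = x·∂`. -/
def θop : EndP := M X * D

/-- `s = (6 − e₁ − ⋯ − e₉)/3`. -/
def sC (e1 e2 e3 e4 e5 e6 e7 e8 e9 : ℂ) : ℂ :=
  (6 - e1 - e2 - e3 - e4 - e5 - e6 - e7 - e8 - e9) / 3

def T12C (e1 e2 e3 _e4 _e5 _e6 e7 e8 e9 : ℂ) : ℂ :=
  (e1 + e2 + e3) - 2 * (e7 + e8 + e9) - 9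

def T11C (e1 e2 e3 e4 e5 e6 e7 e8 e9 : ℂ) : ℂ :=
  let s11 := e1 + e2 + e3;
  let s12 := e4 + e5 + e6;
  let s13 := e7 + e8 + e9;
  let s21 := e1*e2 + e1*e3 + e2*e3;
  let s22 := e4*e5 + e4*e6 + e5*e6;
  let s23 := e7*e8 + e7*e9 + e8*e9;
  -8 + (s11^2 + 2*s11*s13 - s12^2 + s13^2)/3 + s11 - 5*s13 - s21 + s22 - 2*s23

def T22C (e1 e2 e3 _e4 _e5 _e6 e7 e8 e9 : ℂ) : ℂ :=
  -2 * (e1 + e2 + e3) + (e7 + e8 + e9) + 18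

def T21C (e1 e2 e3 e4 e5 e6 e7 e8 e9 : ℂ) : ℂ :=
  let s11 := e1 + e2 + e3;
  let s12 := e4 + e5 + e6;
  let s13 := e7 + e8 + e9;
  let s21 := e1*e2 + e1*e3 + e2*e3;
  let s22 := e4*e5 + e4*e6 + e5*e6;
  let s23 := e7*e8 + e7*e9 + e8*e9;
  35 + (-s11^2 - 2*s11*s13 + s12^2 - s13^2)/3 - 7*s11 + 5*s13 + 2*s21 - s22 + s23

def T20C (e1 e2 e3 e4 e5 e6 e7 e8 e9 u : ℂ) : ℂ :=
  let s11 := e1 + e2 + e3;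
  let s12 := e4 + e5 + e6;
  let s13 := e7 + e8 + e9;
  let s21 := e1*e2 + e1*e3 + e2*e3;
  let s22 := e4*e5 + e4*e6 + e5*e6;
  let s31 := e1*e2*e3;
  let s32 := e4*e5*e6;
  let s33 := e7*e8*e9;
  -u + 19 + (s11^2*s13 - s11*s12^2 + s11*s13^2 - s12^2*s13)/9
    + (s13^3 + s11^3 - 2*s12^3)/27
    + (-2*s11^2 - 4*s11*s13 + s11*s22 + 2*s12^2 + s22*s12 - 2*s13^2 + s22*s13)/3
    - 5*s11 + 4*s13 + 3*s21 - 2*s22 - s31 - s32 - s33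

/-- `B₀(t) = (t+e₇)(t+e₈)(t+e₉)`. -/
def B0op (e7 e8 e9 : ℂ) (t : EndP) : EndP :=
  (t + e7 • 1) * (t + e8 • 1) * (t + e9 • 1)

/-- `B₁(t) = −3t³ + T₁₂t² + T₁₁t + u`. -/
def B1op (e1 e2 e3 e4 e5 e6 e7 e8 e9 u : ℂ) (t : EndP) : EndP :=
  (-3 : ℂ) • t ^ 3 + (T12C e1 e2 e3 e4 e5 e6 e7 e8 e9) • t ^ 2
    + (T11C e1 e2 e3 e4 e5 e6 e7 e8 e9) • t + u • 1

/-- `B₂(t) = 3t³ + T₂₂t² + T₂₁t + T₂₀`. -/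
def B2op (e1 e2 e3 e4 e5 e6 e7 e8 e9 u : ℂ) (t : EndP) : EndP :=
  (3 : ℂ) • t ^ 3 + (T22C e1 e2 e3 e4 e5 e6 e7 e8 e9) • t ^ 2
    + (T21C e1 e2 e3 e4 e5 e6 e7 e8 e9) • t + (T20C e1 e2 e3 e4 e5 e6 e7 e8 e9 u) • 1

/-- `T₃(t) = −(t+3−e₁)(t+3−e₂)(t+3−e₃)`. -/
def T3op (e1 e2 e3 : ℂ) (t : EndP) : EndP :=
  -((t + (3 - e1) • 1) * (t + (3 - e2) • 1) * (t + (3 - e3) • 1))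

/-- The operator `H₆(e,u)`. -/
def H6op (e1 e2 e3 e4 e5 e6 e7 e8 e9 u : ℂ) : EndP :=
  let s := sC e1 e2 e3 e4 e5 e6 e7 e8 e9;
  (θop + (s + 2) • 1) * (θop + (s + 1) • 1) * (θop + s • 1) * B0op e7 e8 e9 θop
    + (θop + (s + 2) • 1) * (θop + (s + 1) • 1) * B1op e1 e2 e3 e4 e5 e6 e7 e8 e9 u θop * D
    + (θop + (s + 2) • 1) * B2op e1 e2 e3 e4 e5 e6 e7 e8 e9 u θop * D ^ 2
    + T3op e1 e2 e3 θop * D ^ 3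


def Lop (P : (ℂ[X])[X]) : EndP := P.sum fun j c => M c * D ^ j

def Rop (P : (ℂ[X])[X]) : EndP := P.sum fun j c => ((-1 : ℂ) ^ j) • (D ^ j * M c)

lemma M_zero : M 0 = 0 := by ext; simp [M]
lemma M_add (p q : ℂ[X]) : M (p + q) = M p + M q := by
  apply LinearMap.ext; intro f; simp [M, add_mul]
lemma M_mul (p q : ℂ[X]) : M (p * q) = M p * M q := by
  apply LinearMap.ext; intro f; simp [M, mul_assoc]
lemma M_one : M 1 = 1 := by
  apply LinearMap.ext; intro f; simp [M]
lemma D_M (p : ℂ[X]) : D * M p = M (derivative p) + M p * D := by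
  apply LinearMap.ext; intro f; simp [M, D]

lemma Lop_add (P Q : (ℂ[X])[X]) : Lop (P + Q) = Lop P + Lop Q := by
  apply Polynomial.sum_add_index <;> intros <;> simp [M_zero, M_add, add_mul]
lemma Rop_add (P Q : (ℂ[X])[X]) : Rop (P + Q) = Rop P + Rop Q := by
  apply Polynomial.sum_add_index <;> intros <;> simp [M_zero, M_add, mul_add]
lemma Lop_zero : Lop 0 = 0 := by simp [Lop]
lemma Rop_zero : Rop 0 = 0 := by simp [Rop]
lemma Lop_monomial (j : ℕ) (c : ℂ[X]) : Lop (monomial j c) = M c * D ^ j :=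
  Polynomial.sum_monomial_index _ _ (by simp [M_zero])
lemma Rop_monomial (j : ℕ) (c : ℂ[X]) :
    Rop (monomial j c) = ((-1 : ℂ) ^ j) • (D ^ j * M c) :=
  Polynomial.sum_monomial_index _ _ (by simp [M_zero])

lemma Lop_sum (n : ℕ) (p : ℕ → ℂ[X]) :
    Lop (∑ j ∈ Finset.range n, monomial j (p j)) = ∑ j ∈ Finset.range n, M (p j) * D ^ j := by
  induction n with
  | zero => simp [Lop_zero]
  | succ n ih => rw [Finset.sum_range_succ, Finset.sum_range_succ, Lop_add, ih, Lop_monomial]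
lemma Rop_sum (n : ℕ) (p : ℕ → ℂ[X]) :
    Rop (∑ j ∈ Finset.range n, monomial j (p j))
      = ∑ j ∈ Finset.range n, ((-1 : ℂ) ^ j) • (D ^ j * M (p j)) := by
  induction n with
  | zero => simp [Rop_zero]
  | succ n ih => rw [Finset.sum_range_succ, Finset.sum_range_succ, Rop_add, ih, Rop_monomial]

lemma D_pow_apply (j : ℕ) (f : ℂ[X]) : (D ^ j) f = derivative^[j] f := by
  rw [Module.End.pow_apply]; rfl

lemma Lop_eq_zero (P : (ℂ[X])[X]) (h : Lop P = 0) : P = 0 := by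
  ext1 k
  induction k using Nat.strong_induction_on with
  | _ k ih =>
    have h1 : (Lop P) (X ^ k) = 0 := by rw [h]; rfl
    rw [Lop, Polynomial.sum_def, LinearMap.sum_apply, Finset.sum_eq_single k] at h1
    · simp only [Module.End.mul_apply, D_pow_apply, M, LinearMap.mulLeft_apply,
        Polynomial.iterate_derivative_X_pow_eq_smul] at h1
      simpa [Nat.descFactorial_self, Nat.factorial_ne_zero] using h1
    · intro b _ hb
      rcases lt_or_gt_of_ne hb with hb | hb
      · rw [ih b hb]; simp [M_zero]
      · simp only [Module.End.mul_apply, D_pow_apply, M, LinearMap.mulLeft_apply,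
          Polynomial.iterate_derivative_X_pow_eq_smul, Nat.descFactorial_of_lt hb]
        simp
    · intro hk
      rw [Polynomial.notMem_support_iff.mp hk]; simp [M_zero]

lemma Lop_neg (P : (ℂ[X])[X]) : Lop (-P) = - Lop P := by
  have := Lop_add P (-P)
  rw [add_neg_cancel, Lop_zero] at this
  exact (neg_eq_of_add_eq_zero_right this.symm).symm

lemma Lop_inj (P Q : (ℂ[X])[X]) (h : Lop P = Lop Q) : P = Q := by
  have := Lop_eq_zero (P + -Q) (by rw [Lop_add, Lop_neg, h, add_neg_cancel])
  rwa [← sub_eq_add_neg, sub_eq_zero] at this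

def Adj (A B : EndP) : Prop := ∃ P, Lop P = A ∧ Rop P = B

lemma Adj.add {A B A' B' : EndP} (h : Adj A B) (h' : Adj A' B') : Adj (A + A') (B + B') := by
  obtain ⟨P, rfl, rfl⟩ := h
  obtain ⟨Q, rfl, rfl⟩ := h'
  exact ⟨P + Q, Lop_add _ _, Rop_add _ _⟩

lemma Adj.Mmul {A B : EndP} (q : ℂ[X]) (h : Adj A B) : Adj (M q * A) (B * M q) := by
  obtain ⟨P, rfl, rfl⟩ := h
  induction P using Polynomial.induction_on' with
  | add P Q hP hQ => rw [Lop_add, Rop_add, mul_add, add_mul]; exact hP.add hQ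
  | monomial n a =>
    refine ⟨monomial n (q * a), ?_, ?_⟩
    · rw [Lop_monomial, Lop_monomial, M_mul, mul_assoc]
    · rw [Rop_monomial, Rop_monomial, mul_comm, M_mul, smul_mul_assoc, mul_assoc]

lemma Adj.Dmul {A B : EndP} (h : Adj A B) : Adj (D * A) (-(B * D)) := by
  obtain ⟨P, rfl, rfl⟩ := h
  induction P using Polynomial.induction_on' with
  | add P Q hP hQ => rw [Lop_add, Rop_add, mul_add, add_mul, neg_add]; exact hP.add hQ
  | monomial n a =>
    refine ⟨monomial n (derivative a) + monomial (n + 1) a, ?_, ?_⟩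
    · rw [Lop_add, Lop_monomial, Lop_monomial, Lop_monomial, ← mul_assoc, D_M, add_mul,
        pow_succ', mul_assoc]
    · rw [Rop_add, Rop_monomial, Rop_monomial, Rop_monomial, pow_succ D, mul_assoc, D_M,
        mul_add, pow_succ, smul_mul_assoc, mul_assoc]
      module

lemma Adj.smul {A B : EndP} (c : ℂ) (h : Adj A B) : Adj (c • A) (c • B) := by
  have hc : M (C c) = c • 1 := by
    apply LinearMap.ext; intro f; simp [M, Polynomial.smul_eq_C_mul]
  simpa [hc] using h.Mmul (C c)

lemma D_θ : D * θop = (θop + 1) * D := by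
  rw [θop, ← mul_assoc, D_M, derivative_X, M_one, add_comm]

lemma Adj.θmul {A B : EndP} (h : Adj A B) : Adj (θop * A) (B * (-θop - 1)) := by
  have := (h.Dmul).Mmul X
  have e : B * (-θop - 1) = -(B * D) * M X := by
    have e' : -θop - 1 = -(D * M X) := by
      rw [D_M, derivative_X, M_one, θop]; abel
    rw [e']
    apply LinearMap.ext; intro f
    simp only [Module.End.mul_apply, LinearMap.neg_apply, map_neg]
  rw [e, θop, mul_assoc]; exact this

lemma Adj.pmul {A B : EndP} (p : ℂ[X]) (h : Adj A B) :
    Adj (aeval θop p * A) (B * aeval θop (p.comp (-X - 1))) := by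
  induction p using Polynomial.induction_on with
  | C a =>
    have h1 := h.smul a
    rw [C_comp, aeval_C, Algebra.algebraMap_eq_smul_one, smul_mul_assoc, one_mul,
      mul_smul_comm, mul_one]
    exact h1
  | add p q hp hq => simpa [add_mul, mul_add] using hp.add hq
  | monomial n a ih =>
    have := ih.θmul
    have e1 : aeval θop (C a * X ^ (n + 1)) * A = θop * (aeval θop (C a * X ^ n) * A) := by
      rw [← mul_assoc, pow_succ, ← mul_assoc, mul_comm, map_mul, aeval_X]
    have e2 : aeval θop ((C a * X ^ (n + 1)).comp (-X - 1))
        = aeval θop ((C a * X ^ n).comp (-X - 1)) * (-θop - 1) := by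
      rw [pow_succ, ← mul_assoc, mul_comp (C a * X ^ n) X, map_mul, X_comp, map_sub, map_neg, aeval_X,
        map_one]
    rw [e1, e2, ← mul_assoc B]; exact this

lemma Adj.Dpow (k : ℕ) : Adj (D ^ k) ((-1 : ℂ) ^ k • D ^ k) :=
  ⟨monomial k 1, by simp [Lop_monomial, M_one], by simp [Rop_monomial, M_one]⟩

lemma D_aeval (p : ℂ[X]) : D * aeval θop p = aeval θop (p.comp (X + 1)) * D := by
  induction p using Polynomial.induction_on with
  | C a =>
    rw [C_comp, aeval_C, Algebra.algebraMap_eq_smul_one, smul_mul_assoc, one_mul,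
      mul_smul_comm, mul_one]
  | add p q hp hq => simp only [map_add, add_comp, mul_add, add_mul, hp, hq]
  | monomial n a ih =>
    rw [pow_succ, ← mul_assoc, map_mul, ← mul_assoc, ih, mul_comp (C a * X ^ n) X, map_mul,
      mul_assoc, aeval_X,
      D_θ, X_comp, map_add, aeval_X, map_one, mul_assoc]

lemma Dpow_aeval (k : ℕ) (p : ℂ[X]) :
    D ^ k * aeval θop p = aeval θop (p.comp (X + C (k : ℂ))) * D ^ k := by
  induction k with
  | zero => simp
  | succ k ih =>
    rw [pow_succ', mul_assoc, ih, ← mul_assoc, D_aeval, comp_assoc, mul_assoc]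
    congr 3
    simp; ring

lemma Adj.term (k : ℕ) (p q : ℂ[X]) (h : ∀ t : ℂ, q.eval t = (-1) ^ k * p.eval (-t - k - 1)) :
    Adj (aeval θop p * D ^ k) (aeval θop q * D ^ k) := by
  have := (Adj.Dpow k).pmul p
  rw [smul_mul_assoc, Dpow_aeval] at this
  have hq : q = C ((-1) ^ k) * ((p.comp (-X - 1)).comp (X + C (k : ℂ))) := by
    apply Polynomial.funext; intro t
    rw [h]; simp [eval_comp]; congr 1; ring
  rw [hq, map_mul, aeval_C, Algebra.algebraMap_eq_smul_one, smul_mul_assoc, one_mul,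
    smul_mul_assoc]
  exact this

def Q0 (s e7 e8 e9 : ℂ) : ℂ[X] :=
  (X + C (s + 2)) * (X + C (s + 1)) * (X + C s) * ((X + C e7) * (X + C e8) * (X + C e9))
def Q1 (s a b c : ℂ) : ℂ[X] :=
  (X + C (s + 2)) * (X + C (s + 1)) * (C (-3) * X ^ 3 + C a * X ^ 2 + C b * X + C c)
def Q2 (s a b c : ℂ) : ℂ[X] :=
  (X + C (s + 2)) * (C 3 * X ^ 3 + C a * X ^ 2 + C b * X + C c)
def Q3 (e1 e2 e3 : ℂ) : ℂ[X] :=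
  -((X + C (3 - e1)) * (X + C (3 - e2)) * (X + C (3 - e3)))

lemma H6_eq (e1 e2 e3 e4 e5 e6 e7 e8 e9 u : ℂ) :
    H6op e1 e2 e3 e4 e5 e6 e7 e8 e9 u =
      aeval θop (Q0 (sC e1 e2 e3 e4 e5 e6 e7 e8 e9) e7 e8 e9) * D ^ 0
      + aeval θop (Q1 (sC e1 e2 e3 e4 e5 e6 e7 e8 e9) (T12C e1 e2 e3 e4 e5 e6 e7 e8 e9)
          (T11C e1 e2 e3 e4 e5 e6 e7 e8 e9) u) * D ^ 1
      + aeval θop (Q2 (sC e1 e2 e3 e4 e5 e6 e7 e8 e9) (T22C e1 e2 e3 e4 e5 e6 e7 e8 e9)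
          (T21C e1 e2 e3 e4 e5 e6 e7 e8 e9) (T20C e1 e2 e3 e4 e5 e6 e7 e8 e9 u)) * D ^ 2
      + aeval θop (Q3 e1 e2 e3) * D ^ 3 := by
  simp only [H6op, B0op, B1op, B2op, T3op, Q0, Q1, Q2, Q3, map_mul, map_neg (aeval (R := ℂ) θop), aeval_X,
    map_add (aeval θop), map_pow, aeval_C, Algebra.algebraMap_eq_smul_one, smul_mul_assoc, one_mul, pow_zero,
    pow_one, mul_one]

/-- Adjoint symmetry of `H₆`: the operator `H₆(e,u)` has an expression `∑ⱼ pⱼ(x)·∂ʲ` with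
polynomial coefficients, and for any such expression the formal adjoint
`∑ⱼ (−1)ʲ ∂ʲ ∘ (pⱼ(x)·)` equals `H₆(2−e₁,…,2−e₆,1−e₇,1−e₈,1−e₉, u′)` where
`u′ = 6s² + (4s₁₂ − 18)s − 6s₁₂ − 2s₂₁ + 2s₂₂ − 4s₂₃ + 8 − u`. -/
theorem H6_adjoint_symmetry (e1 e2 e3 e4 e5 e6 e7 e8 e9 u s u' : ℂ)
    (hs : s = sC e1 e2 e3 e4 e5 e6 e7 e8 e9)
    (hu' : u' = 6*s^2 + (4*(e4 + e5 + e6) - 18)*s - 6*(e4 + e5 + e6)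
        - 2*(e1*e2 + e1*e3 + e2*e3) + 2*(e4*e5 + e4*e6 + e5*e6)
        - 4*(e7*e8 + e7*e9 + e8*e9) + 8 - u) :
    (∃ (n : ℕ) (p : ℕ → Polynomial ℂ),
      H6op e1 e2 e3 e4 e5 e6 e7 e8 e9 u = ∑ j ∈ Finset.range n, M (p j) * D ^ j) ∧
    ∀ (n : ℕ) (p : ℕ → Polynomial ℂ),
      H6op e1 e2 e3 e4 e5 e6 e7 e8 e9 u = ∑ j ∈ Finset.range n, M (p j) * D ^ j →
      ∑ j ∈ Finset.range n, ((-1 : ℂ) ^ j) • (D ^ j * M (p j))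
        = H6op (2 - e1) (2 - e2) (2 - e3) (2 - e4) (2 - e5) (2 - e6)
            (1 - e7) (1 - e8) (1 - e9) u' := by
  have key : Adj (H6op e1 e2 e3 e4 e5 e6 e7 e8 e9 u)
      (H6op (2 - e1) (2 - e2) (2 - e3) (2 - e4) (2 - e5) (2 - e6)
            (1 - e7) (1 - e8) (1 - e9) u') := by
    have hs' : sC (2 - e1) (2 - e2) (2 - e3) (2 - e4) (2 - e5) (2 - e6) (1 - e7) (1 - e8) (1 - e9)
        = -1 - s := by rw [hs]; unfold sC; ring
    have h12 : T12C (2 - e1) (2 - e2) (2 - e3) (2 - e4) (2 - e5) (2 - e6) (1 - e7) (1 - e8) (1 - e9)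
        = -18 - T12C e1 e2 e3 e4 e5 e6 e7 e8 e9 := by unfold T12C; ring
    have h11 : T11C (2 - e1) (2 - e2) (2 - e3) (2 - e4) (2 - e5) (2 - e6) (1 - e7) (1 - e8) (1 - e9)
        = -36 - 4 * T12C e1 e2 e3 e4 e5 e6 e7 e8 e9 + T11C e1 e2 e3 e4 e5 e6 e7 e8 e9 := by
      unfold T12C T11C; ring
    have h10 : u' = -24 - 4 * T12C e1 e2 e3 e4 e5 e6 e7 e8 e9 + 2 * T11C e1 e2 e3 e4 e5 e6 e7 e8 e9 - u := by
      rw [hu', hs]; unfold T12C T11C sC; ring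
    have h22 : T22C (2 - e1) (2 - e2) (2 - e3) (2 - e4) (2 - e5) (2 - e6) (1 - e7) (1 - e8) (1 - e9)
        = 27 - T22C e1 e2 e3 e4 e5 e6 e7 e8 e9 := by unfold T22C; ring
    have h21 : T21C (2 - e1) (2 - e2) (2 - e3) (2 - e4) (2 - e5) (2 - e6) (1 - e7) (1 - e8) (1 - e9)
        = 81 - 6 * T22C e1 e2 e3 e4 e5 e6 e7 e8 e9 + T21C e1 e2 e3 e4 e5 e6 e7 e8 e9 := by
      unfold T22C T21C; ring
    have h20 : T20C (2 - e1) (2 - e2) (2 - e3) (2 - e4) (2 - e5) (2 - e6) (1 - e7) (1 - e8) (1 - e9) u'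
        = 81 - 9 * T22C e1 e2 e3 e4 e5 e6 e7 e8 e9 + 3 * T21C e1 e2 e3 e4 e5 e6 e7 e8 e9
          - T20C e1 e2 e3 e4 e5 e6 e7 e8 e9 u := by
      rw [h10]; unfold T22C T21C T20C T12C T11C; ring
    rw [H6_eq, H6_eq, hs', h12, h11, h22, h21, h20, ← hs]
    clear hs'
    generalize T12C e1 e2 e3 e4 e5 e6 e7 e8 e9 = a1 at *
    generalize T11C e1 e2 e3 e4 e5 e6 e7 e8 e9 = b1 at *
    generalize T22C e1 e2 e3 e4 e5 e6 e7 e8 e9 = a2 at *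
    generalize T21C e1 e2 e3 e4 e5 e6 e7 e8 e9 = b2 at *
    generalize T20C e1 e2 e3 e4 e5 e6 e7 e8 e9 u = c2 at *
    rw [h10]
    refine ((Adj.add (Adj.term 0 _ _ ?_) (Adj.term 1 _ _ ?_)).add (Adj.term 2 _ _ ?_)).add
      (Adj.term 3 _ _ ?_) <;> intro t
    · simp [Q0]; ring
    · simp [Q1]; ring
    · simp [Q2]; ring
    · simp [Q3]; ring
  obtain ⟨P, hL, hR⟩ := key
  constructor
  · refine ⟨P.natDegree + 1, P.coeff, ?_⟩
    rw [← hL, Lop, Polynomial.sum_over_range]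
    simp [M_zero]
  · intro n p h
    rw [← Lop_sum, ← hL] at h
    rw [← Rop_sum, ← Lop_inj _ _ h, hR]
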